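/- Let p be an odd prime and r a positive integer. The number of natural numbers u with 0 ≤ u ≤ p^{3r} − 1 such that every digit in the base-p expansion of u is at most (p−1)/2 and p^r − 1 divides u equals 1 + ((p+1)(p+3)/8)^r. -/

import Mathlib

/-!
Put `q = b ^ r` and cut the `k * r` base-`b` digits of `u` into `k` blocks of length `r`. Since
`q ≡ 1 [MOD q - 1]`, the number `u` is congruent modulo `q - 1` to the sum of its blocks, that is,
to `∑ j, s j * b ^ j` where `s j` is the sum of the `k` digits in position `j` of the blocks. If
the digits are at most `m` and `k * m < 2 * (b - 1)`, this sum is less than `2 * (q - 1)`, so it is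
divisible by `q - 1` only if it is `0` or `q - 1 = ∑ j, (b - 1) * b ^ j`. As `|s j - (b - 1)| < b`,
comparing the two expansions digit by digit forces `s j = b - 1` for all `j` in the second case.
The `r` columns are then chosen independently, which produces the `r`-th power, while the first
case contributes only `u = 0`.
-/

open Finset

section Columns

variable {b r : ℕ}

theorem eq_zero_of_sum_mul_pow_eq_zero {b : ℤ} {n : ℕ} {e : Fin n → ℤ} (he : ∀ j, |e j| < b)
    (hsum : ∑ j, e j * b ^ (j : ℕ) = 0) (j : Fin n) : e j = 0 := by
  induction n with
  | zero => exact j.elim0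
  | succ n ih =>
    have hb : b ≠ 0 := ((abs_nonneg _).trans_lt (he 0)).ne'
    have hsplit : e 0 + b * ∑ i : Fin n, e i.succ * b ^ (i : ℕ) = 0 := by
      rw [← hsum, Fin.sum_univ_succ, mul_sum]
      simp only [Fin.val_zero, pow_zero, mul_one, Fin.val_succ, pow_succ']
      congr! 2
      ring
    have hzero : e 0 = 0 :=
      Int.eq_zero_of_abs_lt_dvd ((dvd_add_left (dvd_mul_right _ _)).1 (hsplit ▸ dvd_zero b)) (he 0)
    have htail : ∑ i : Fin n, e i.succ * b ^ (i : ℕ) = 0 := by simpa [hzero, hb] using hsplit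
    exact Fin.cases hzero (ih (fun i => he i.succ) htail) j

theorem sum_const_sub_one_mul_pow (b r : ℕ) :
    ∑ j : Fin r, (b - 1) * b ^ (j : ℕ) = b ^ r - 1 := by
  rcases b.eq_zero_or_pos with rfl | hb
  · cases r <;> simp
  rw [← mul_sum, Fin.sum_univ_eq_sum_range (b ^ ·), mul_comm, geom_sum_mul_of_one_le hb]

theorem sum_mul_pow_eq_pow_sub_one_iff {s : Fin r → ℕ} (hs : ∀ j, s j < 2 * b - 1) :
    ∑ j, s j * b ^ (j : ℕ) = b ^ r - 1 ↔ ∀ j, s j = b - 1 := by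
  rw [← sum_const_sub_one_mul_pow b r]
  refine ⟨fun h j => ?_, fun h => by simp only [h]⟩
  have hdiff : ∑ j, ((s j : ℤ) - (b - 1 : ℕ)) * (b : ℤ) ^ (j : ℕ) = 0 := by
    simp only [sub_mul, sum_sub_distrib]
    exact sub_eq_zero.2 (mod_cast h)
  have habs (j : Fin r) : |(s j : ℤ) - (b - 1 : ℕ)| < b := by
    have := hs j
    rw [abs_lt]
    omega
  exact Int.ofNat_inj.1 (sub_eq_zero.1 (eq_zero_of_sum_mul_pow_eq_zero habs hdiff j))

theorem sum_mul_pow_lt_two_mul_pow_sub_one (hr : 0 < r) {s : Fin r → ℕ}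
    (hs : ∀ j, s j < 2 * (b - 1)) :
    ∑ j, s j * b ^ (j : ℕ) < 2 * (b ^ r - 1) := by
  have : NeZero r := ⟨hr.ne'⟩
  have hb : 0 < b := by have := hs 0; omega
  rw [← sum_const_sub_one_mul_pow b r, mul_sum]
  refine sum_lt_sum_of_nonempty univ_nonempty fun j _ => ?_
  rw [← mul_assoc]
  exact Nat.mul_lt_mul_of_pos_right (hs j) (by positivity)

theorem pow_sub_one_dvd_sum_mul_pow_iff (hr : 0 < r) {s : Fin r → ℕ}
    (hs : ∀ j, s j < 2 * (b - 1)) :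
    b ^ r - 1 ∣ ∑ j, s j * b ^ (j : ℕ) ↔ (∀ j, s j = 0) ∨ ∀ j, s j = b - 1 := by
  have hb : b ≠ 0 := by have := hs ⟨0, hr⟩; omega
  have hzero : ∑ j, s j * b ^ (j : ℕ) = 0 ↔ ∀ j, s j = 0 := by
    simp [sum_eq_zero_iff, hb]
  rw [← hzero, ← sum_mul_pow_eq_pow_sub_one_iff fun j => (hs j).trans_le (by omega)]
  constructor
  · rintro ⟨c, hc⟩
    have hlt := sum_mul_pow_lt_two_mul_pow_sub_one hr hs
    rw [hc, mul_comm] at hlt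
    have hc2 : c < 2 := lt_of_mul_lt_mul_right hlt (Nat.zero_le _)
    interval_cases c
    · exact .inl hc
    · exact .inr (by rw [hc, mul_one])
  · rintro (h | h) <;> simp [h]

end Columns

section Digits

variable {b m : ℕ}

theorem forall_mem_digits_le_iff (hb : 1 < b) (u : ℕ) :
    (∀ c ∈ Nat.digits b u, c ≤ m) ↔ ∀ i, u / b ^ i % b ≤ m := by
  simp only [← Nat.getD_digits u _ hb, List.forall_mem_iff_getElem]
  refine ⟨fun h i => ?_, fun h i hi => ?_⟩
  · rcases lt_or_ge i (Nat.digits b u).length with hi | hi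
    · simpa [hi] using h i hi
    · simp [hi]
  · simpa [hi] using h i

theorem sum_mul_pow_lt_pow {n : ℕ} {x : Fin n → ℕ} (hx : ∀ i, x i < b) :
    ∑ i, x i * b ^ (i : ℕ) < b ^ n :=
  (finFunctionFinEquiv fun i => ⟨x i, hx i⟩).isLt

theorem sum_mul_pow_div_pow_mod {n : ℕ} {x : Fin n → ℕ} (hx : ∀ i, x i < b) (j : Fin n) :
    (∑ i, x i * b ^ (i : ℕ)) / b ^ (j : ℕ) % b = x j :=
  congr_arg Fin.val <|
    congr_fun (finFunctionFinEquiv.symm_apply_apply fun i => (⟨x i, hx i⟩ : Fin b)) j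

theorem sum_div_pow_mod_mul_pow {n u : ℕ} (hu : u < b ^ n) :
    ∑ i : Fin n, u / b ^ (i : ℕ) % b * b ^ (i : ℕ) = u :=
  congr_arg Fin.val (finFunctionFinEquiv.apply_symm_apply ⟨u, hu⟩)

theorem card_filter_forall_mem_digits_le (hb : 1 < b) (hm : m < b) (n : ℕ) (P : ℕ → Prop)
    [DecidablePred P] :
    #{u ∈ range (b ^ n) | (∀ c ∈ Nat.digits b u, c ≤ m) ∧ P u} =
      #{x ∈ Fintype.piFinset fun _ : Fin n => range (m + 1) |
        P (∑ i : Fin n, x i * b ^ (i : ℕ))} := by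
  refine card_nbij' (fun u i => u / b ^ (i : ℕ) % b) (fun x => ∑ i, x i * b ^ (i : ℕ))
    ?_ ?_ ?_ ?_
  · intro u hu
    simp only [coe_filter, mem_range, Set.mem_ofPred_eq, forall_mem_digits_le_iff hb] at hu
    simpa [sum_div_pow_mod_mul_pow hu.1, Nat.lt_succ_iff, hu.2.2] using fun i : Fin n => hu.2.1 i
  · intro x hx
    simp only [coe_filter, Fintype.mem_piFinset, mem_range, Nat.lt_succ_iff,
      Set.mem_ofPred_eq] at hx
    have hlt (i : Fin n) : x i < b := (hx.1 i).trans_lt hm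
    simp only [coe_filter, mem_range, Set.mem_ofPred_eq, forall_mem_digits_le_iff hb]
    refine ⟨sum_mul_pow_lt_pow hlt, fun i => ?_, hx.2⟩
    rcases lt_or_ge i n with hi | hi
    · exact (sum_mul_pow_div_pow_mod hlt ⟨i, hi⟩).trans_le (hx.1 _)
    · have hsmall := (sum_mul_pow_lt_pow hlt).trans_le (Nat.pow_le_pow_right hb.le hi)
      simp [Nat.div_eq_of_lt hsmall]
  · intro u hu
    exact sum_div_pow_mod_mul_pow (mem_range.1 (mem_filter.1 hu).1)
  · intro x hx
    simp only [coe_filter, Fintype.mem_piFinset, mem_range, Set.mem_ofPred_eq] at hx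
    exact funext (sum_mul_pow_div_pow_mod fun i => (hx.1 i).trans_le hm)

end Digits

/-- The `k`-tuples of natural numbers at most `m` with sum `s`: the possible columns of digits with
a prescribed column sum. -/
def boundedTuples (k m s : ℕ) : Finset (Fin k → ℕ) :=
  {d ∈ Fintype.piFinset fun _ => range (m + 1) | ∑ i, d i = s}

theorem mem_boundedTuples {k m s : ℕ} {d : Fin k → ℕ} :
    d ∈ boundedTuples k m s ↔ (∀ i, d i ≤ m) ∧ ∑ i, d i = s := by
  simp [boundedTuples]

theorem sum_tsub_add_sum {k m : ℕ} {d : Fin k → ℕ} (hd : ∀ i, d i ≤ m) :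
    ∑ i, (m - d i) + ∑ i, d i = k * m := by
  simp [← sum_add_distrib, Nat.sub_add_cancel (hd _)]

-- The complement `d ↦ m - d` turns the sum `k * m - m` into `m`, where the bound `m` is automatic.
theorem card_boundedTuples_of_add_eq_mul {k m s : ℕ} (hs : s + m = k * m) :
    #(boundedTuples k m s) = (k + m - 1).choose m := by
  have hcard : #(finsuppAntidiag (univ : Finset (Fin k)) m) = (k + m - 1).choose m := by
    rw [card_finsuppAntidiag_nat_eq_choose, card_fin]
  rw [← hcard]
  have hle (e) (he : e ∈ finsuppAntidiag (univ : Finset (Fin k)) m) (i : Fin k) : e i ≤ m :=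
    (single_le_sum (fun _ _ => Nat.zero_le _) (mem_univ i)).trans_eq (mem_finsuppAntidiag.1 he).1
  refine card_nbij' (fun d => Finsupp.equivFunOnFinite.symm fun i => m - d i) (fun e i => m - e i)
    ?_ ?_ ?_ ?_
  · intro d hd
    obtain ⟨hbound, hsum⟩ := mem_boundedTuples.1 hd
    have := sum_tsub_add_sum hbound
    simp only [mem_coe, mem_finsuppAntidiag, Finsupp.equivFunOnFinite_symm_apply_apply, subset_univ,
      and_true]
    omega
  · intro e he
    have hsum : ∑ i, e i = m := (mem_finsuppAntidiag.1 he).1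
    have hcompl : ∑ i, (m - e i) = s := by
      have := sum_tsub_add_sum (hle e he)
      omega
    exact mem_boundedTuples.2 ⟨fun i => tsub_le_self, hcompl⟩
  · intro d hd
    exact funext fun i => Nat.sub_sub_self ((mem_boundedTuples.1 hd).1 i)
  · intro e he
    exact Finsupp.ext fun i => Nat.sub_sub_self (hle e he i)

theorem card_boundedTuples_three (m : ℕ) :
    #(boundedTuples 3 m (2 * m)) = (m + 1) * (m + 2) / 2 := by
  rw [card_boundedTuples_of_add_eq_mul (by ring), show 3 + m - 1 = m + 2 by omega,
    Nat.choose_symm_add, Nat.choose_two_right]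
  simp [mul_comm]

section Grid

variable {b k m r : ℕ}

/-- Cuts a sequence of `k * r` digits into `k` blocks of length `r` and reads the resulting array by
columns: entry `i` of column `j` is the digit in position `j` of block `i`, i.e. in position
`j + r * i` of the sequence. -/
def digitColumns (k r : ℕ) : (Fin (k * r) → ℕ) ≃ (Fin r → Fin k → ℕ) :=
  (finProdFinEquiv.symm.arrowCongr (Equiv.refl ℕ)).trans
    ((Equiv.curry _ _ _).trans (Equiv.piComm _))

theorem digitColumns_apply (x : Fin (k * r) → ℕ) (j : Fin r) (i : Fin k) :
    digitColumns k r x j i = x (finProdFinEquiv (i, j)) := rfl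

theorem forall_digitColumns_iff {x : Fin (k * r) → ℕ} {P : ℕ → Prop} :
    (∀ j i, P (digitColumns k r x j i)) ↔ ∀ n, P (x n) := by
  simp only [digitColumns_apply]
  rw [forall_comm, ← Prod.forall' (p := fun i j => P (x (finProdFinEquiv (i, j))))]
  exact finProdFinEquiv.forall_congr_right (q := fun n => P (x n))

theorem sum_mul_pow_modEq_sum_digitColumns (hb : 0 < b) (x : Fin (k * r) → ℕ) :
    ∑ n, x n * b ^ (n : ℕ) ≡
      ∑ j, (∑ i, digitColumns k r x j i) * b ^ (j : ℕ) [MOD b ^ r - 1] := by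
  have hone : b ^ r ≡ 1 [MOD b ^ r - 1] :=
    ((Nat.modEq_iff_dvd' (Nat.one_le_pow _ _ hb)).2 dvd_rfl).symm
  rw [← finProdFinEquiv.sum_comp, Fintype.sum_prod_type_right]
  simp only [sum_mul, digitColumns_apply]
  refine Nat.ModEq.sum fun j _ => Nat.ModEq.sum fun i _ => Nat.ModEq.mul_left _ ?_
  simpa [pow_add, pow_mul] using (hone.pow (i : ℕ)).mul_left (b ^ (j : ℕ))

theorem pow_sub_one_dvd_sum_mul_pow_iff_digitColumns (hr : 0 < r) (hkm : k * m < 2 * (b - 1))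
    {x : Fin (k * r) → ℕ} (hx : ∀ n, x n ≤ m) :
    b ^ r - 1 ∣ ∑ n, x n * b ^ (n : ℕ) ↔
      digitColumns k r x = 0 ∨ ∀ j, ∑ i, digitColumns k r x j i = b - 1 := by
  have hcol (j : Fin r) : ∑ i, digitColumns k r x j i < 2 * (b - 1) :=
    (sum_le_card_nsmul univ _ m fun i _ => hx _).trans_lt (by simpa using hkm)
  rw [(sum_mul_pow_modEq_sum_digitColumns (by omega) x).dvd_iff dvd_rfl,
    pow_sub_one_dvd_sum_mul_pow_iff hr hcol]
  simp [funext_iff, sum_eq_zero_iff]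

theorem card_digits_le_and_pow_sub_one_dvd (hm : m < b) (hkm : k * m < 2 * (b - 1)) (hr : 0 < r) :
    #{u ∈ range (b ^ (k * r)) | (∀ c ∈ Nat.digits b u, c ≤ m) ∧ b ^ r - 1 ∣ u} =
      1 + #(boundedTuples k m (b - 1)) ^ r := by
  have hzero : 0 ∉ Fintype.piFinset fun _ : Fin r => boundedTuples k m (b - 1) := fun h => by
    have : 0 = b - 1 := by
      simpa using (mem_boundedTuples.1 (Fintype.mem_piFinset.1 h ⟨0, hr⟩)).2
    omega
  rw [card_filter_forall_mem_digits_le (by omega) hm, add_comm 1 (_ ^ _),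
    ← Fintype.card_piFinset_const, ← card_insert_of_notMem hzero]
  refine card_equiv (digitColumns k r) fun x => ?_
  simp only [mem_filter, Fintype.mem_piFinset, mem_range, Nat.lt_succ_iff, mem_insert,
    mem_boundedTuples, forall_and, forall_digitColumns_iff (P := (· ≤ m))]
  constructor
  · rintro ⟨hx, hdvd⟩
    exact ((pow_sub_one_dvd_sum_mul_pow_iff_digitColumns hr hkm hx).1 hdvd).imp_right (⟨hx, ·⟩)
  · intro h
    have hx (n) : x n ≤ m := by
      rcases h with h0 | ⟨hx, -⟩
      · exact (forall_digitColumns_iff (P := (· ≤ m))).1 (by simp [h0]) n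
      · exact hx n
    exact ⟨hx, (pow_sub_one_dvd_sum_mul_pow_iff_digitColumns hr hkm hx).2 (h.imp_right And.right)⟩

end Grid

theorem stmt_18_general (p r : ℕ) (hp : 1 < p) (hodd : Odd p) (hr : 0 < r) :
    ((Finset.range (p ^ (3 * r))).filter
      (fun u => (∀ c ∈ Nat.digits p u, c ≤ (p - 1) / 2) ∧ (p ^ r - 1) ∣ u)).card
    = 1 + ((p + 1) * (p + 3) / 8) ^ r := by
  obtain ⟨m, rfl⟩ := hodd
  have hhalf : (2 * m + 1 - 1) / 2 = m := by omega
  have hcount : (2 * m + 1 + 1) * (2 * m + 1 + 3) / 8 = (m + 1) * (m + 2) / 2 := by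
    rw [show (2 * m + 1 + 1) * (2 * m + 1 + 3) = 4 * ((m + 1) * (m + 2)) by ring]
    omega
  rw [hhalf, hcount, card_digits_le_and_pow_sub_one_dvd (by omega) (by omega) hr,
    Nat.add_sub_cancel, card_boundedTuples_three]

/-- For `p` an odd prime and `r ≥ 1`, the number of `u ∈ {0, …, p^(3r)−1}` all of whose
base-`p` digits are at most `(p−1)/2` and which are divisible by `p^r − 1` equals
`1 + ((p+1)(p+3)/8)^r`. -/
theorem stmt_18 (p r : ℕ) (hp : p.Prime) (hodd : Odd p) (hr : 0 < r) :
    ((Finset.range (p ^ (3 * r))).filter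
      (fun u => (∀ c ∈ Nat.digits p u, c ≤ (p - 1) / 2) ∧ (p ^ r - 1) ∣ u)).card
    = 1 + ((p + 1) * (p + 3) / 8) ^ r :=
  stmt_18_general p r hp.one_lt hodd hr
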